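/- For a positive integer n, let σ be a generator of Gal(F_{q^n}/F_q) and let D_n denote the number of triples (c_0, c_1, c_4) ∈ F_{q^n}³ such that the F_q-linear map x ↦ c_0·x + c_1·σ(x) + c_4·σ⁴(x) on F_{q^n} has kernel of F_q-dimension exactly 4. Then: D_n = 0 for 5 ≤ n ≤ 11 with n ≠ 8; D_n = (q^n−1)²/(q^4−1) for n ∈ {8, 12}; D_13 = 0 if q is not a power of 3 and D_13 = (q^13−1)²/(q−1) if q is a power of 3; and D_15 = 0 if q is odd and D_15 = (q^15−1)²/(q−1) if q is even. -/

import Mathlib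

/-- The number of triples `(c₀, c₁, c₄) ∈ F_{q^n}³` such that the `F_q`-linear map
`x ↦ c₀·x + c₁·σ(x) + c₄·σ⁴(x)` has kernel of `F_q`-dimension exactly `4`. -/
noncomputable def weightCount4 (K L : Type*) [Field K] [Field L] [Algebra K L]
    (σ : L ≃ₐ[K] L) : ℕ :=
  Nat.card {c : L × L × L //
    Module.finrank K
      (LinearMap.ker
        (LinearMap.mulLeft K c.1 + LinearMap.mulLeft K c.2.1 ∘ₗ σ.toLinearMap
          + LinearMap.mulLeft K c.2.2 ∘ₗ (σ ^ 4 : L ≃ₐ[K] L).toLinearMap)) = 4}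

set_option linter.unusedSectionVars false
set_option linter.unusedSimpArgs false
set_option linter.unusedTactic false
set_option linter.unreachableTactic false
section aux
variable {K L : Type*} [Field K] [Field L] [Fintype K] [Fintype L] [Algebra K L]

theorem aux_abel (c y : ℕ → L) (m : ℕ) :
    ∑ i ∈ Finset.range (m+1), (∑ j ∈ Finset.range (i+1), c j) * (y i - y (i+1))
      = ∑ i ∈ Finset.range (m+1), c i * y i - (∑ j ∈ Finset.range (m+1), c j) * y (m+1) := by
  induction m with
  | zero => simp; ring
  | succ m ih =>
    rw [Finset.sum_range_succ, ih, Finset.sum_range_succ (fun i => c i * y i) (m+1),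
      Finset.sum_range_succ c (m+1)]
    ring

theorem aux_indep (τ : L ≃ₐ[K] L) (f : ℕ) (hf : Nat.card {x : L // τ x = x} = f) (m : ℕ) :
    ∀ (c : ℕ → L) (V : AddSubgroup L), f ^ m < Nat.card V →
      (∀ x ∈ V, ∑ i ∈ Finset.range (m+1), c i * (τ ^ i) x = 0) → ∀ i ≤ m, c i = 0 := by
  induction m with
  | zero =>
    intro c V hV h i hi
    obtain rfl : i = 0 := by omega
    have : Nontrivial V := by
      rw [← Finite.one_lt_card_iff_nontrivial]; simpa using hV
    obtain ⟨u, hu⟩ := exists_ne (0 : V)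
    have := h u u.2
    simp at this
    rcases this with h | h
    · exact h
    · exact absurd h (by simpa using hu)
  | succ m ih =>
    intro c V hV h
    have hf1 : 0 < f := by
      rw [← hf]
      have : Nonempty {x : L // τ x = x} := ⟨⟨0, by simp⟩⟩
      exact Nat.card_pos
    have : Nontrivial V := by
      rw [← Finite.one_lt_card_iff_nontrivial]
      exact lt_of_le_of_lt (Nat.one_le_pow _ _ hf1) hV
    obtain ⟨u, hu⟩ := exists_ne (0 : V)
    have hu0 : (u : L) ≠ 0 := by simpa using hu
    let φ : L →+ L :=
      { toFun := fun x => x / u - τ (x / u)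
        map_zero' := by simp
        map_add' := by intro x y; simp only [add_div, map_add]; ring }
    let ψ : V →+ L := φ.comp V.subtype
    have hcard : Nat.card V = Nat.card ψ.ker * Nat.card ψ.range := by
      rw [← AddSubgroup.card_mul_index ψ.ker, AddSubgroup.index_ker]
      try rfl
    have hker : Nat.card ψ.ker ≤ f := by
      rw [← hf]
      refine Nat.card_le_card_of_injective
        (fun x : ψ.ker => (⟨(x.1 : L) / u, ?_⟩ : {x : L // τ x = x})) ?_
      · have := x.2
        rw [AddMonoidHom.mem_ker] at this
        have h2 : (x.1 : L) / u - τ ((x.1 : L) / u) = 0 := this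
        exact (sub_eq_zero.1 h2).symm
      · intro x y hxy
        have : (x.1 : L) / u = (y.1 : L) / u := by simpa using hxy
        have : (x.1 : L) = (y.1 : L) := by field_simp at this; exact this
        exact Subtype.ext (Subtype.ext this)
    have hV' : f ^ m < Nat.card ψ.range := by
      by_contra hcon
      push Not at hcon
      have := Nat.mul_le_mul hker hcon
      rw [← hcard] at this
      rw [pow_succ'] at hV
      omega
    let c' : ℕ → L := fun i => c i * (τ ^ i) (u : L)
    have hsum : ∑ i ∈ Finset.range (m+1+1), c' i = 0 := h u u.2
    have key := ih (fun i => ∑ j ∈ Finset.range (i+1), c' j) ψ.range hV' (by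
      rintro _ ⟨x, rfl⟩
      have e := aux_abel c' (fun i => (τ ^ i) ((x : L) / u)) (m+1)
      rw [hsum, zero_mul, sub_zero, Finset.sum_range_succ, hsum, zero_mul, add_zero] at e
      have e2 : ∑ i ∈ Finset.range (m+1+1), c' i * (τ ^ i) ((x : L) / u) = 0 := by
        rw [← h x x.2]
        refine Finset.sum_congr rfl fun i _ => ?_
        simp only [c', map_div₀]
        have : (τ ^ i) (u : L) ≠ 0 := (map_ne_zero_iff _ (τ ^ i).injective).2 hu0
        field_simp
      rw [e2] at e
      rw [← e]
      refine Finset.sum_congr rfl fun i _ => ?_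
      congr 1
      change (τ ^ i) ((x : L) / u - τ ((x : L) / u)) = _
      rw [map_sub, pow_succ, AlgEquiv.mul_apply])
    have hc' : ∀ i ≤ m + 1, c' i = 0 := by
      intro i hi
      have h1 : ∑ j ∈ Finset.range (i+1), c' j = 0 := by
        rcases Nat.lt_or_ge i (m+1) with h | h
        · exact key i (by omega)
        · obtain rfl : i = m + 1 := by omega
          exact hsum
      rcases i with _ | i
      · simpa using h1
      · rw [Finset.sum_range_succ, key i (by omega), zero_add] at h1
        exact h1
    intro i hi
    have := hc' i hi
    simp only [c', mul_eq_zero] at this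
    rcases this with h | h
    · exact h
    · exact absurd h ((map_ne_zero_iff _ (τ ^ i).injective).2 hu0)

/-- partial norm -/
def auxN (τ : L ≃ₐ[K] L) (m : ℕ) (b : L) : L := ∏ i ∈ Finset.range m, (τ ^ i) b

theorem auxN_succ (τ : L ≃ₐ[K] L) (m : ℕ) (b : L) : auxN τ (m+1) b = b * τ (auxN τ m b) := by
  simp only [auxN]
  rw [Finset.prod_range_succ', map_prod, mul_comm]
  simp [pow_succ', AlgEquiv.mul_apply]

theorem aux_h90 (τ : L ≃ₐ[K] L) (f : ℕ) (hf : Nat.card {x : L // τ x = x} = f) (m : ℕ)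
    (hm : f ^ m < Nat.card {x : L // (τ ^ (m+1)) x = x}) (b : L) (hb : auxN τ (m+1) b = 1) :
    ∃ l : L, l ≠ 0 ∧ (τ ^ (m+1)) l = l ∧ b * τ l = l := by
  let V : AddSubgroup L :=
    { carrier := {x | (τ ^ (m+1)) x = x}
      zero_mem' := by simp
      add_mem' := by intro x y hx hy; simp only [Set.mem_ofPred_eq] at *; rw [map_add, hx, hy]
      neg_mem' := by intro x hx; simp only [Set.mem_ofPred_eq] at *; rw [map_neg, hx] }
  have h : ¬ (∀ x ∈ V, ∑ i ∈ Finset.range (m+1), auxN τ i b * (τ ^ i) x = 0) := by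
    intro h
    have := aux_indep τ f hf m (fun i => auxN τ i b) V hm h 0 (Nat.zero_le _)
    simp [auxN] at this
  push Not at h
  obtain ⟨t, ht, hne⟩ := h
  have ht' : (τ ^ (m+1)) t = t := ht
  have hl : b * τ (∑ i ∈ Finset.range (m+1), auxN τ i b * (τ ^ i) t)
      = ∑ i ∈ Finset.range (m+1), auxN τ i b * (τ ^ i) t := by
    rw [map_sum, Finset.mul_sum]
    have : ∀ i ∈ Finset.range (m+1), b * τ (auxN τ i b * (τ ^ i) t)
        = auxN τ (i+1) b * (τ ^ (i+1)) t := by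
      intro i _
      rw [map_mul, auxN_succ, pow_succ', AlgEquiv.mul_apply]; ring
    rw [Finset.sum_congr rfl this, Finset.sum_range_succ, hb, ht', Finset.sum_range_succ' (fun i => auxN τ i b * (τ ^ i) t)]
    simp [auxN]
  refine ⟨_, hne, ?_, hl⟩
  have : ∀ (k : ℕ) (l : L), b * τ l = l → auxN τ k b * (τ ^ k) l = l := by
    intro k l hl
    induction k with
    | zero => simp [auxN]
    | succ k ih =>
      rw [auxN_succ, pow_succ', AlgEquiv.mul_apply]
      calc b * τ (auxN τ k b) * τ ((τ ^ k) l) = b * τ (auxN τ k b * (τ ^ k) l) := by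
            rw [map_mul]; ring
        _ = l := by rw [ih, hl]
  have := this (m+1) _ hl
  rwa [hb, one_mul] at this

theorem aux_h90_card (τ : L ≃ₐ[K] L) (f : ℕ) (hf : Nat.card {x : L // τ x = x} = f) (hf2 : 1 < f)
    (m : ℕ)
    (hm : Nat.card {x : L // (τ ^ (m+1)) x = x} = f ^ (m+1)) :
    Nat.card {b : L // auxN τ (m+1) b = 1} * (f - 1) = f ^ (m+1) - 1 := by
  let W : Subgroup Lˣ :=
    { carrier := {x | (τ ^ (m+1)) (x : L) = x}
      one_mem' := by simp
      mul_mem' := by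
        intro x y hx hy
        simp only [Set.mem_ofPred_eq] at *; rw [Units.val_mul, map_mul, hx, hy]
      inv_mem' := by intro x hx; simp only [Set.mem_ofPred_eq] at *; simp [hx] }
  let δ : Lˣ →* Lˣ :=
    { toFun := fun u => u / Units.map (τ : L →* L) u
      map_one' := by simp
      map_mul' := by intro x y; rw [map_mul, mul_div_mul_comm] }
  have hδ : ∀ u : Lˣ, ((δ u : Lˣ) : L) * τ u = u := by
    intro u
    have : τ (u : L) ≠ 0 := by simp
    change ((u / Units.map (τ : L →* L) u : Lˣ) : L) * τ u = u
    rw [Units.val_div_eq_div_val]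
    change (u : L) / τ u * τ u = u
    field_simp
  let ψ : W →* Lˣ := δ.comp W.subtype
  have hunits : ∀ (ρ : L ≃ₐ[K] L) (k : ℕ), Nat.card {x : L // ρ x = x} = k →
      Nat.card {x : Lˣ // ρ (x : L) = x} = k - 1 := by
    intro ρ k hk
    classical
    have e : {x : L // ρ x = x} ≃ Option {x : Lˣ // ρ (x : L) = x} :=
      { toFun := fun x => if h : x.1 = 0 then none else some ⟨Units.mk0 x.1 h, by simpa using x.2⟩
        invFun := fun o => match o with
          | none => ⟨0, by simp⟩
          | some x => ⟨x.1, x.2⟩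
        left_inv := by
          rintro ⟨x, hx⟩
          by_cases h : x = 0 <;> simp [h]
        right_inv := by
          rintro (_ | ⟨x, hx⟩) <;> simp }
    rw [← hk, Nat.card_congr e, Finite.card_option]; simp
  have hW : Nat.card W = f ^ (m+1) - 1 := hunits _ _ hm
  have hker : Nat.card ψ.ker = f - 1 := by
    rw [← hunits _ _ hf]
    have hmem : ∀ x : Lˣ, δ x = 1 ↔ τ (x : L) = x := by
      intro x
      have h0 : τ (x : L) ≠ 0 := by simp
      rw [Units.ext_iff, ← mul_left_inj' h0, hδ, Units.val_one, one_mul]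
      exact eq_comm
    have hfix : ∀ (k : ℕ) (x : L), τ x = x → (τ ^ k) x = x := by
      intro k x hx
      induction k with
      | zero => simp
      | succ k ih => rw [pow_succ', AlgEquiv.mul_apply, ih, hx]
    refine Nat.card_congr
      { toFun := fun x => ⟨x.1.1, (hmem _).1 x.2⟩
        invFun := fun x => ⟨⟨x.1, hfix _ _ x.2⟩, (hmem _).2 x.2⟩
        left_inv := fun x => rfl
        right_inv := fun x => rfl }
  have hrange : Nat.card ψ.range = Nat.card {b : L // auxN τ (m+1) b = 1} := by
    have htel : ∀ (k : ℕ) (b l : L), b * τ l = l → auxN τ k b * (τ ^ k) l = l := by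
      intro k b l hl
      induction k with
      | zero => simp [auxN]
      | succ k ih =>
        rw [auxN_succ, pow_succ', AlgEquiv.mul_apply]
        calc b * τ (auxN τ k b) * τ ((τ ^ k) l) = b * τ (auxN τ k b * (τ ^ k) l) := by
              rw [map_mul]; ring
          _ = l := by rw [ih, hl]
    refine Nat.card_congr (Equiv.ofBijective (fun x => ⟨(x.1 : L), ?_⟩) ⟨?_, ?_⟩)
    · obtain ⟨u, hu⟩ := x.2
      have h1 := htel (m+1) _ _ (hδ u.1)
      have h2 : (τ ^ (m+1)) ((u.1 : Lˣ) : L) = (u.1 : Lˣ) := u.2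
      rw [h2] at h1
      have h3 : δ u.1 = x.1 := hu
      rw [h3] at h1
      exact mul_eq_right₀ (Units.ne_zero _) |>.1 h1
    · intro x y hxy
      simp only [Subtype.mk.injEq] at hxy
      exact Subtype.ext (Units.ext hxy)
    · rintro ⟨b, hb⟩
      obtain ⟨l, hl0, hl1, hl2⟩ := aux_h90 τ f hf m (by
        rw [hm]; exact Nat.pow_lt_pow_right hf2 (by omega)) b hb
      refine ⟨⟨δ (Units.mk0 l hl0), ⟨⟨Units.mk0 l hl0, hl1⟩, rfl⟩⟩, ?_⟩
      apply Subtype.ext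
      have := hδ (Units.mk0 l hl0)
      simp only [Units.val_mk0] at this
      have h0 : τ l ≠ 0 := by simpa using hl0
      exact mul_right_cancel₀ h0 (this.trans hl2.symm)
  rw [← hrange, ← hker, ← hW, ← Subgroup.card_mul_index ψ.ker, Subgroup.index_ker, mul_comm]

theorem aux_fix_card (q n s d m : ℕ) (hq : 1 < q) (hn : n = d * m) (hn0 : 0 < n)
    (hcardL : Fintype.card L = q ^ n) (hsn : Nat.gcd s n = 1) 
    (σ : L ≃ₐ[K] L) (hσ : ∀ x : L, σ x = x ^ q ^ s) :
    Nat.card {x : L // (σ ^ d) x = x} = q ^ d := by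
  have hpow : ∀ (k : ℕ) (x : L), (σ ^ k) x = x ^ q ^ (s * k) := by
    intro k x
    induction k with
    | zero => simp
    | succ k ih => rw [pow_succ', AlgEquiv.mul_apply, ih, hσ, ← pow_mul, ← pow_add]; rfl
  classical
  have hcu : Nat.card Lˣ = q ^ n - 1 := by
    rw [Nat.card_eq_fintype_card, Fintype.card_units, hcardL]
  have e : {x : L // (σ ^ d) x = x} ≃ Option {x : Lˣ // (σ ^ d) (x : L) = x} :=
      { toFun := fun x => if h : x.1 = 0 then none else some ⟨Units.mk0 x.1 h, by simpa using x.2⟩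
        invFun := fun o => match o with
          | none => ⟨0, by simp⟩
          | some x => ⟨x.1, x.2⟩
        left_inv := by
          rintro ⟨x, hx⟩
          by_cases h : x = 0 <;> simp [h]
        right_inv := by
          rintro (_ | ⟨x, hx⟩) <;> simp }
  rw [Nat.card_congr e, Finite.card_option]
  have e2 : Nat.card {x : Lˣ // (σ ^ d) (x : L) = x} = Nat.card (powMonoidHom (q ^ (s*d) - 1) : Lˣ →* Lˣ).ker := by
    refine Nat.card_congr (Equiv.subtypeEquivRight fun x => ?_)
    rw [MonoidHom.mem_ker, powMonoidHom_apply, hpow, Units.ext_iff, Units.val_pow_eq_pow_val, Units.val_one]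
    have : q ^ (s * d) = (q ^ (s*d) - 1) + 1 := by
      have := Nat.one_le_pow (s*d) q (by omega); omega
    rw [this, pow_succ, Nat.add_sub_cancel]
    exact mul_eq_right₀ (Units.ne_zero _)
  rw [e2, IsCyclic.card_powMonoidHom_ker, hcu, Nat.pow_sub_one_gcd_pow_sub_one]
  have : Nat.gcd n (s*d) = d := by
    subst hn
    rw [mul_comm s d, Nat.gcd_mul_left]
    have : Nat.gcd m s = 1 := by
      rw [Nat.gcd_comm]; exact Nat.Coprime.coprime_mul_left_right hsn
    rw [this, mul_one]
  have h1 := Nat.one_le_pow d q (by omega)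
  rw [this]
  omega

/-- the coefficients of `σ^k` modulo `σ^4 - b σ - a` -/
def auxV (σ : L ≃ₐ[K] L) (a b : L) : ℕ → L × L × L × L
  | 0 => (1, 0, 0, 0)
  | k+1 => (a * σ (auxV σ a b k).2.2.2, σ (auxV σ a b k).1 + b * σ (auxV σ a b k).2.2.2,
      σ (auxV σ a b k).2.1, σ (auxV σ a b k).2.2.1)

theorem auxV_four (σ : L ≃ₐ[K] L) (a b : L) : auxV σ a b 4 = (a, b, 0, 0) := by
  simp [auxV]

theorem aux_div (σ : L ≃ₐ[K] L) (a b : L) (k : ℕ) :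
    ∃ e : ℕ → L, e k = 1 ∧ ∀ x, ∑ i ∈ Finset.range (k+1), e i * (σ ^ i) ((σ ^ 4) x - (a * x + b * σ x))
      = (σ ^ (k+4)) x - ((auxV σ a b (k+4)).1 * x + (auxV σ a b (k+4)).2.1 * σ x
        + (auxV σ a b (k+4)).2.2.1 * (σ ^ 2) x + (auxV σ a b (k+4)).2.2.2 * (σ ^ 3) x) := by
  induction k with
  | zero =>
    refine ⟨fun _ => 1, rfl, fun x => ?_⟩
    rw [Nat.zero_add, auxV_four]
    simp
  | succ k ih =>
    obtain ⟨e, he, h⟩ := ih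
    refine ⟨fun i => match i with
      | 0 => σ (auxV σ a b (k+4)).2.2.2
      | i+1 => σ (e i), by simp [he], fun x => ?_⟩
    have h2 := congrArg σ (h x)
    rw [map_sum] at h2
    rw [Finset.sum_range_succ']
    have : ∀ i ∈ Finset.range (k+1), σ (e i) * (σ ^ (i+1)) ((σ ^ 4) x - (a * x + b * σ x))
      = σ (e i * (σ ^ i) ((σ ^ 4) x - (a * x + b * σ x))) := by
      intro i _
      rw [map_mul, pow_succ', AlgEquiv.mul_apply]
    rw [Finset.sum_congr rfl this, h2]
    have e1 : k + 1 + 4 = (k + 4) + 1 := by ring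
    rw [e1]
    rw [show auxV σ a b (k+4+1) = (a * σ (auxV σ a b (k+4)).2.2.2, σ (auxV σ a b (k+4)).1 + b * σ (auxV σ a b (k+4)).2.2.2,
      σ (auxV σ a b (k+4)).2.1, σ (auxV σ a b (k+4)).2.2.1) from rfl]
    have p4 : (σ ^ 4) x = σ (σ (σ (σ x))) := by simp
    have p3 : (σ ^ 3) x = σ (σ (σ x)) := by simp
    have p2 : (σ ^ 2) x = (σ (σ x)) := by simp
    have p5 : (σ ^ (k+4+1)) x = σ ((σ ^ (k+4)) x) := by rw [pow_succ', AlgEquiv.mul_apply]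
    rw [p4, p3, p2, p5]
    simp only [map_sub, map_add, map_mul, pow_zero, AlgEquiv.one_apply]
    ring

theorem aux_cond (q n : ℕ) (hq : 1 < q) (hn : 5 ≤ n)
    (hcardL : Fintype.card L = q ^ n)
    (σ : L ≃ₐ[K] L) (hf : Nat.card {x : L // σ x = x} = q) (hσn : ∀ x, (σ ^ n) x = x) (a b : L) :
    Nat.card {x : L // (σ ^ 4) x = a * x + b * σ x} = q ^ 4 ↔ auxV σ a b n = (1, 0, 0, 0) := by
  let f : L →+ L :=
    { toFun := fun x => (σ ^ 4) x - (a * x + b * σ x)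
      map_zero' := by simp
      map_add' := by intro x y; simp only [map_add]; ring }
  obtain ⟨k, rfl⟩ : ∃ k, n = k + 4 := ⟨n - 4, by omega⟩
  obtain ⟨e, he, hdiv⟩ := aux_div σ a b k
  have hker : Nat.card {x : L // (σ ^ 4) x = a * x + b * σ x} = Nat.card f.ker := by
    refine Nat.card_congr (Equiv.subtypeEquivRight fun x => ?_)
    rw [AddMonoidHom.mem_ker]
    exact sub_eq_zero.symm
  rw [hker]
  constructor
  · intro h
    let v := auxV σ a b (k+4)
    have := aux_indep σ q hf 3 (fun i => match i with
      | 0 => v.1 - 1 | 1 => v.2.1 | 2 => v.2.2.1 | _ => v.2.2.2) f.ker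
      (by rw [h]; exact Nat.pow_lt_pow_right hq (by omega)) (by
        intro x hx
        have hx' : (σ ^ 4) x - (a * x + b * σ x) = 0 := hx
        have h1 := hdiv x
        rw [hx', hσn] at h1
        simp only [map_zero, mul_zero, Finset.sum_const_zero] at h1
        simp only [Finset.sum_range_succ, Finset.sum_range_zero, pow_zero, pow_one, AlgEquiv.one_apply, v]
        linear_combination h1)
    have h0 := this 0 (by omega)
    have h1 := this 1 (by omega)
    have h2 := this 2 (by omega)
    have h3 := this 3 (by omega)
    simp only [v] at h0 h1 h2 h3
    refine Prod.ext (sub_eq_zero.1 h0) (Prod.ext h1 (Prod.ext h2 h3))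
  · intro h
    rw [h] at hdiv
    have hrange : Nat.card f.range ≤ q ^ k := by
      by_contra hcon
      push Not at hcon
      have := aux_indep σ q hf k e f.range hcon (by
        rintro _ ⟨x, rfl⟩
        have := hdiv x
        rw [hσn] at this
        change ∑ i ∈ Finset.range (k+1), e i * (σ ^ i) ((σ ^ 4) x - (a * x + b * σ x)) = 0
        rw [this]; simp) k le_rfl
      rw [he] at this
      exact one_ne_zero this
    have hle : Nat.card f.ker ≤ q ^ 4 := by
      by_contra hcon
      push Not at hcon
      have := aux_indep σ q hf 4 (fun i => match i with
        | 0 => -a | 1 => -b | 2 => 0 | 3 => 0 | _ => 1) f.ker hcon (by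
        intro x hx
        have hx' : (σ ^ 4) x - (a * x + b * σ x) = 0 := hx
        simp only [Finset.sum_range_succ, Finset.sum_range_zero, pow_zero, pow_one, AlgEquiv.one_apply]
        linear_combination hx') 4 le_rfl
      exact one_ne_zero this
    have hc : Nat.card f.ker * Nat.card f.range = q ^ (k+4) := by
      rw [← hcardL, ← Nat.card_eq_fintype_card, ← AddSubgroup.card_mul_index f.ker, AddSubgroup.index_ker]
    refine le_antisymm hle ?_
    have hqk : 0 < q ^ k := by positivity
    have : q ^ 4 * q ^ k ≤ Nat.card f.ker * q ^ k := by
      rw [← pow_add, add_comm 4 k, ← hc]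
      exact Nat.mul_le_mul_left _ hrange
    exact Nat.le_of_mul_le_mul_right this hqk

theorem aux_count (q n : ℕ) (hq : 1 < q) (hn : 5 ≤ n) (hcardK : Fintype.card K = q)
    (hcardL : Fintype.card L = q ^ n)
    (σ : L ≃ₐ[K] L) (hf : Nat.card {x : L // σ x = x} = q) (hσn : ∀ x, (σ ^ n) x = x) :
    weightCount4 K L σ
      = (q ^ n - 1) * Nat.card {ab : L × L // auxV σ ab.1 ab.2 n = (1, 0, 0, 0)} := by
  classical
  have hcu : Nat.card Lˣ = q ^ n - 1 := by
    rw [Nat.card_eq_fintype_card, Fintype.card_units, hcardL]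
  have hiff : ∀ c : L × L × L, Module.finrank K
      (LinearMap.ker
        (LinearMap.mulLeft K c.1 + LinearMap.mulLeft K c.2.1 ∘ₗ σ.toLinearMap
          + LinearMap.mulLeft K c.2.2 ∘ₗ (σ ^ 4 : L ≃ₐ[K] L).toLinearMap)) = 4 ↔
      c.2.2 ≠ 0 ∧ auxV σ (-c.1 / c.2.2) (-c.2.1 / c.2.2) n = (1, 0, 0, 0) := by
    rintro ⟨c0, c1, c4⟩
    dsimp only
    set V := LinearMap.ker
        (LinearMap.mulLeft K c0 + LinearMap.mulLeft K c1 ∘ₗ σ.toLinearMap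
          + LinearMap.mulLeft K c4 ∘ₗ (σ ^ 4 : L ≃ₐ[K] L).toLinearMap) with hVdef
    have hmem : ∀ x, x ∈ V ↔ c0 * x + c1 * σ x + c4 * (σ ^ 4) x = 0 := by
      intro x
      rw [hVdef, LinearMap.mem_ker]
      rfl
    have hcard : Nat.card V = q ^ Module.finrank K V := by
      rw [Module.natCard_eq_pow_finrank (K := K), Nat.card_eq_fintype_card, hcardK]
    have hfr : Module.finrank K V = 4 ↔ Nat.card V = q ^ 4 := by
      rw [hcard]
      exact (Nat.pow_right_injective hq).eq_iff.symm
    rw [hfr]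
    by_cases h4 : c4 = 0
    · simp only [h4, ne_eq, not_true_eq_false, false_and, iff_false]
      intro h
      have := aux_indep σ q hf 1 (fun i => match i with
        | 0 => c0 | _ => c1) V.toAddSubgroup (by
          change _ < Nat.card V
          rw [h]; exact Nat.pow_lt_pow_right hq (by omega)) (by
        intro x hx
        have hx' := (hmem x).1 hx
        rw [h4] at hx'
        simp only [Finset.sum_range_succ, Finset.sum_range_zero, pow_zero, pow_one, AlgEquiv.one_apply]
        linear_combination hx')
      have h0 : c0 = 0 := this 0 (by omega)
      have h1 : c1 = 0 := this 1 (by omega)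
      have htop : V = ⊤ := by
        rw [Submodule.eq_top_iff']
        intro x
        rw [hmem, h0, h1, h4]; simp
      rw [htop] at h
      have h2 : Nat.card (⊤ : Submodule K L) = q ^ n := by
        rw [← hcardL, ← Nat.card_eq_fintype_card]
        exact Nat.card_congr (Equiv.Set.univ L)
      rw [h2] at h
      have := Nat.pow_right_injective hq h
      omega
    · rw [← aux_cond q n hq hn hcardL σ hf hσn]
      simp only [ne_eq, h4, not_false_eq_true, true_and]
      have : Nat.card V = Nat.card {x : L // (σ ^ 4) x = -c0 / c4 * x + -c1 / c4 * σ x} := by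
        refine Nat.card_congr (Equiv.subtypeEquivRight fun x => ?_)
        rw [hmem]
        constructor
        · intro h
          field_simp
          linear_combination h
        · intro h
          rw [h]; field_simp; ring
      rw [this]
  unfold weightCount4
  rw [Nat.card_congr (Equiv.subtypeEquivRight hiff), ← hcu, ← Nat.card_prod]
  refine Nat.card_congr
    { toFun := fun c => (Units.mk0 c.1.2.2 c.2.1, ⟨(-c.1.1 / c.1.2.2, -c.1.2.1 / c.1.2.2), c.2.2⟩)
      invFun := fun d => ⟨(-d.2.1.1 * d.1, -d.2.1.2 * d.1, d.1), d.1.ne_zero, by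
        have h := d.2.2
        have h0 := d.1.ne_zero
        dsimp only
        convert h using 2 <;> field_simp⟩
      left_inv := ?_
      right_inv := ?_ }
  · rintro ⟨⟨c0, c1, c4⟩, h, h'⟩
    dsimp only at h
    simp only [Units.val_mk0, Subtype.mk.injEq, Prod.mk.injEq, and_true]
    constructor <;> field_simp
  · rintro ⟨u, ⟨⟨x, y⟩, h⟩⟩
    have h0 := u.ne_zero
    simp only [Units.mk0_val, Prod.mk.injEq, Subtype.mk.injEq, true_and]
    constructor <;> field_simp

theorem auxV_succ (σ : L ≃ₐ[K] L) (a b : L) (k : ℕ) : auxV σ a b (k+1) =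
    (a * σ (auxV σ a b k).2.2.2, σ (auxV σ a b k).1 + b * σ (auxV σ a b k).2.2.2,
      σ (auxV σ a b k).2.1, σ (auxV σ a b k).2.2.1) := rfl

theorem auxV_list (σ : L ≃ₐ[K] L) (α β : ℕ → L) (hα : ∀ i, σ (α i) = α (i+1))
    (hβ : ∀ i, σ (β i) = β (i+1)) :
    auxV σ (α 0) (β 0) 5 = (0,
      α 1,
      β 1,
      0) ∧
    auxV σ (α 0) (β 0) 6 = (0,
      0,
      α 2,
      β 2) ∧
    auxV σ (α 0) (β 0) 7 = (α 0 * β 3,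
      β 0 * β 3,
      0,
      α 3) ∧
    auxV σ (α 0) (β 0) 8 = (α 0 * α 4,
      α 1 * β 4 + β 0 * α 4,
      β 1 * β 4,
      0) ∧
    auxV σ (α 0) (β 0) 9 = (0,
      α 1 * α 5,
      α 2 * β 5 + β 1 * α 5,
      β 2 * β 5) ∧
    auxV σ (α 0) (β 0) 10 = (α 0 * β 3 * β 6,
      β 0 * β 3 * β 6,
      α 2 * α 6,
      α 3 * β 6 + β 2 * α 6) ∧
    auxV σ (α 0) (β 0) 11 = (α 0 * α 4 * β 7 + α 0 * β 3 * α 7,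
      α 1 * β 4 * β 7 + β 0 * α 4 * β 7 + β 0 * β 3 * α 7,
      β 1 * β 4 * β 7,
      α 3 * α 7) ∧
    auxV σ (α 0) (β 0) 12 = (α 0 * α 4 * α 8,
      α 1 * α 5 * β 8 + α 1 * β 4 * α 8 + β 0 * α 4 * α 8,
      α 2 * β 5 * β 8 + β 1 * α 5 * β 8 + β 1 * β 4 * α 8,
      β 2 * β 5 * β 8) ∧
    auxV σ (α 0) (β 0) 13 = (α 0 * β 3 * β 6 * β 9,
      α 1 * α 5 * α 9 + β 0 * β 3 * β 6 * β 9,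
      α 2 * α 6 * β 9 + α 2 * β 5 * α 9 + β 1 * α 5 * α 9,
      α 3 * β 6 * β 9 + β 2 * α 6 * β 9 + β 2 * β 5 * α 9) ∧
    auxV σ (α 0) (β 0) 14 = (α 0 * α 4 * β 7 * β 10 + α 0 * β 3 * α 7 * β 10 + α 0 * β 3 * β 6 * α 10,
      α 1 * β 4 * β 7 * β 10 + β 0 * α 4 * β 7 * β 10 + β 0 * β 3 * α 7 * β 10 + β 0 * β 3 * β 6 * α 10,
      α 2 * α 6 * α 10 + β 1 * β 4 * β 7 * β 10,
      α 3 * α 7 * β 10 + α 3 * β 6 * α 10 + β 2 * α 6 * α 10) ∧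
    auxV σ (α 0) (β 0) 15 = (α 0 * α 4 * α 8 * β 11 + α 0 * α 4 * β 7 * α 11 + α 0 * β 3 * α 7 * α 11,
      α 1 * α 5 * β 8 * β 11 + α 1 * β 4 * α 8 * β 11 + α 1 * β 4 * β 7 * α 11 + β 0 * α 4 * α 8 * β 11 + β 0 * α 4 * β 7 * α 11 + β 0 * β 3 * α 7 * α 11,
      α 2 * β 5 * β 8 * β 11 + β 1 * α 5 * β 8 * β 11 + β 1 * β 4 * α 8 * β 11 + β 1 * β 4 * β 7 * α 11,
      α 3 * α 7 * α 11 + β 2 * β 5 * β 8 * β 11) := by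
  have h4 : auxV σ (α 0) (β 0) 4 = (α 0,
      β 0,
      0,
      0) := auxV_four _ _ _
  have h5 : auxV σ (α 0) (β 0) 5 = (0,
      α 1,
      β 1,
      0) := by
    rw [auxV_succ, h4]
    refine Prod.ext ?_ (Prod.ext ?_ (Prod.ext ?_ ?_)) <;>
      simp only [map_add, map_mul, map_zero, hα, hβ, Nat.reduceAdd] <;> try ring
  have h6 : auxV σ (α 0) (β 0) 6 = (0,
      0,
      α 2,
      β 2) := by
    rw [auxV_succ, h5]
    refine Prod.ext ?_ (Prod.ext ?_ (Prod.ext ?_ ?_)) <;>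
      simp only [map_add, map_mul, map_zero, hα, hβ, Nat.reduceAdd] <;> try ring
  have h7 : auxV σ (α 0) (β 0) 7 = (α 0 * β 3,
      β 0 * β 3,
      0,
      α 3) := by
    rw [auxV_succ, h6]
    refine Prod.ext ?_ (Prod.ext ?_ (Prod.ext ?_ ?_)) <;>
      simp only [map_add, map_mul, map_zero, hα, hβ, Nat.reduceAdd] <;> try ring
  have h8 : auxV σ (α 0) (β 0) 8 = (α 0 * α 4,
      α 1 * β 4 + β 0 * α 4,
      β 1 * β 4,
      0) := by
    rw [auxV_succ, h7]
    refine Prod.ext ?_ (Prod.ext ?_ (Prod.ext ?_ ?_)) <;>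
      simp only [map_add, map_mul, map_zero, hα, hβ, Nat.reduceAdd] <;> try ring
  have h9 : auxV σ (α 0) (β 0) 9 = (0,
      α 1 * α 5,
      α 2 * β 5 + β 1 * α 5,
      β 2 * β 5) := by
    rw [auxV_succ, h8]
    refine Prod.ext ?_ (Prod.ext ?_ (Prod.ext ?_ ?_)) <;>
      simp only [map_add, map_mul, map_zero, hα, hβ, Nat.reduceAdd] <;> try ring
  have h10 : auxV σ (α 0) (β 0) 10 = (α 0 * β 3 * β 6,
      β 0 * β 3 * β 6,
      α 2 * α 6,
      α 3 * β 6 + β 2 * α 6) := by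
    rw [auxV_succ, h9]
    refine Prod.ext ?_ (Prod.ext ?_ (Prod.ext ?_ ?_)) <;>
      simp only [map_add, map_mul, map_zero, hα, hβ, Nat.reduceAdd] <;> try ring
  have h11 : auxV σ (α 0) (β 0) 11 = (α 0 * α 4 * β 7 + α 0 * β 3 * α 7,
      α 1 * β 4 * β 7 + β 0 * α 4 * β 7 + β 0 * β 3 * α 7,
      β 1 * β 4 * β 7,
      α 3 * α 7) := by
    rw [auxV_succ, h10]
    refine Prod.ext ?_ (Prod.ext ?_ (Prod.ext ?_ ?_)) <;>
      simp only [map_add, map_mul, map_zero, hα, hβ, Nat.reduceAdd] <;> try ring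
  have h12 : auxV σ (α 0) (β 0) 12 = (α 0 * α 4 * α 8,
      α 1 * α 5 * β 8 + α 1 * β 4 * α 8 + β 0 * α 4 * α 8,
      α 2 * β 5 * β 8 + β 1 * α 5 * β 8 + β 1 * β 4 * α 8,
      β 2 * β 5 * β 8) := by
    rw [auxV_succ, h11]
    refine Prod.ext ?_ (Prod.ext ?_ (Prod.ext ?_ ?_)) <;>
      simp only [map_add, map_mul, map_zero, hα, hβ, Nat.reduceAdd] <;> try ring
  have h13 : auxV σ (α 0) (β 0) 13 = (α 0 * β 3 * β 6 * β 9,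
      α 1 * α 5 * α 9 + β 0 * β 3 * β 6 * β 9,
      α 2 * α 6 * β 9 + α 2 * β 5 * α 9 + β 1 * α 5 * α 9,
      α 3 * β 6 * β 9 + β 2 * α 6 * β 9 + β 2 * β 5 * α 9) := by
    rw [auxV_succ, h12]
    refine Prod.ext ?_ (Prod.ext ?_ (Prod.ext ?_ ?_)) <;>
      simp only [map_add, map_mul, map_zero, hα, hβ, Nat.reduceAdd] <;> try ring
  have h14 : auxV σ (α 0) (β 0) 14 = (α 0 * α 4 * β 7 * β 10 + α 0 * β 3 * α 7 * β 10 + α 0 * β 3 * β 6 * α 10,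
      α 1 * β 4 * β 7 * β 10 + β 0 * α 4 * β 7 * β 10 + β 0 * β 3 * α 7 * β 10 + β 0 * β 3 * β 6 * α 10,
      α 2 * α 6 * α 10 + β 1 * β 4 * β 7 * β 10,
      α 3 * α 7 * β 10 + α 3 * β 6 * α 10 + β 2 * α 6 * α 10) := by
    rw [auxV_succ, h13]
    refine Prod.ext ?_ (Prod.ext ?_ (Prod.ext ?_ ?_)) <;>
      simp only [map_add, map_mul, map_zero, hα, hβ, Nat.reduceAdd] <;> try ring
  have h15 : auxV σ (α 0) (β 0) 15 = (α 0 * α 4 * α 8 * β 11 + α 0 * α 4 * β 7 * α 11 + α 0 * β 3 * α 7 * α 11,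
      α 1 * α 5 * β 8 * β 11 + α 1 * β 4 * α 8 * β 11 + α 1 * β 4 * β 7 * α 11 + β 0 * α 4 * α 8 * β 11 + β 0 * α 4 * β 7 * α 11 + β 0 * β 3 * α 7 * α 11,
      α 2 * β 5 * β 8 * β 11 + β 1 * α 5 * β 8 * β 11 + β 1 * β 4 * α 8 * β 11 + β 1 * β 4 * β 7 * α 11,
      α 3 * α 7 * α 11 + β 2 * β 5 * β 8 * β 11) := by
    rw [auxV_succ, h14]
    refine Prod.ext ?_ (Prod.ext ?_ (Prod.ext ?_ ?_)) <;>
      simp only [map_add, map_mul, map_zero, hα, hβ, Nat.reduceAdd] <;> try ring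
  exact ⟨h5, h6, h7, h8, h9, h10, h11, h12, h13, h14, h15⟩

theorem aux_ne (σ : L ≃ₐ[K] L) (α : ℕ → L) (hα : ∀ i, σ (α i) = α (i+1)) (h : α 0 ≠ 0) (i : ℕ) :
    α i ≠ 0 := by
  induction i with
  | zero => exact h
  | succ i ih => rw [← hα]; simpa using ih

theorem aux_alg13 (σ : L ≃ₐ[K] L) (α β : ℕ → L) (hα : ∀ i, σ (α i) = α (i+1))
    (hβ : ∀ i, σ (β i) = β (i+1)) (hβp : ∀ i, β (i+13) = β i) :
    auxV σ (α 0) (β 0) 13 = (1, 0, 0, 0) ↔ (3 : L) = 0 ∧ α 0 * β 3 * β 6 * β 9 = 1 ∧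
      β 0 * β 1 * β 2 * β 3 * β 4 * β 5 * β 6 * β 7 * β 8 * β 9 * β 10 * β 11 * β 12 = -1 := by
  obtain ⟨-, -, -, -, -, -, -, -, h13, -, -⟩ := auxV_list σ α β hα hβ
  rw [h13]
  simp only [Prod.mk.injEq]
  have hA : α 0 * β 3 * β 6 * β 9 = 1 → ∀ k, α k * β (k+3) * β (k+6) * β (k+9) = 1 := by
    intro h k
    induction k with
    | zero => exact h
    | succ k ih =>
      have := congrArg σ ih
      simp only [map_mul, map_one, hα, hβ] at this
      exact this
  have B13 : β 13 = β 0 := hβp 0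
  have B14 : β 14 = β 1 := hβp 1
  have B15 : β 15 = β 2 := hβp 2
  have B16 : β 16 = β 3 := hβp 3
  have B17 : β 17 = β 4 := hβp 4
  have B18 : β 18 = β 5 := hβp 5
  have key : α 0 * β 3 * β 6 * β 9 = 1 → (α 1 * β 4 * β 7 * β 10 = 1 ∧ α 2 * β 5 * β 8 * β 11 = 1 ∧
    α 3 * β 6 * β 9 * β 12 = 1 ∧ α 5 * β 8 * β 11 * β 1 = 1 ∧ α 6 * β 9 * β 12 * β 2 = 1 ∧
    α 9 * β 12 * β 2 * β 5 = 1) := by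
    intro h
    have h1 := hA h 1
    have h2 := hA h 2
    have h3 := hA h 3
    have h5 := hA h 5
    have h6 := hA h 6
    have h9 := hA h 9
    simp only [Nat.reduceAdd, B14, B15, B18] at h1 h2 h3 h5 h6 h9
    exact ⟨h1, h2, h3, h5, h6, h9⟩
  constructor
  · rintro ⟨h0, hB, hC, hD⟩
    obtain ⟨h1, h2, h3, h5, h6, h9⟩ := key h0
    refine ⟨?_, h0, ?_⟩
    · linear_combination β 12 * hD - h3 - h6 - h9
    · have hp : (α 1 * β 4 * β 7 * β 10) * (α 5 * β 8 * β 11 * β 1) * (α 9 * β 12 * β 2 * β 5) = 1 := by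
        rw [h1, h5, h9]; ring
      linear_combination (β 4 * β 7 * β 10 * β 8 * β 11 * β 1 * β 12 * β 2 * β 5) * hB - hp
  · rintro ⟨h30, h0, hN⟩
    obtain ⟨h1, h2, h3, h5, h6, h9⟩ := key h0
    have hb0 : β 0 ≠ 0 := by
      intro h; rw [h] at hN; simp at hN
    have nb := aux_ne σ β hβ hb0
    refine ⟨h0, ?_, ?_, ?_⟩
    · have hp : (α 1 * β 4 * β 7 * β 10) * (α 5 * β 8 * β 11 * β 1) * (α 9 * β 12 * β 2 * β 5) = 1 := by
        rw [h1, h5, h9]; ring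
      have hM : β 4 * β 7 * β 10 * β 8 * β 11 * β 1 * β 12 * β 2 * β 5 ≠ 0 := by
        simp [nb]
      apply mul_left_cancel₀ hM
      linear_combination hp + hN
    · have hM : β 2 * β 5 * β 8 * β 11 * β 12 ≠ 0 := by simp [nb]
      have p1 : (α 2 * β 5 * β 8 * β 11) * (α 6 * β 9 * β 12 * β 2) = 1 := by rw [h2, h6]; ring
      have p2 : (α 2 * β 5 * β 8 * β 11) * (α 9 * β 12 * β 2 * β 5) = 1 := by rw [h2, h9]; ring
      have p3 : (α 5 * β 8 * β 11 * β 1) * (α 9 * β 12 * β 2 * β 5) = 1 := by rw [h5, h9]; ring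
      apply mul_left_cancel₀ hM
      linear_combination p1 + p2 + p3 + h30
    · apply mul_left_cancel₀ (nb 12)
      linear_combination h3 + h6 + h9 + h30

theorem aux_alg15 (σ : L ≃ₐ[K] L) (α β : ℕ → L) (hα : ∀ i, σ (α i) = α (i+1))
    (hβ : ∀ i, σ (β i) = β (i+1)) (hαp : ∀ i, α (i+15) = α i) (hβp : ∀ i, β (i+15) = β i) :
    auxV σ (α 0) (β 0) 15 = (1, 0, 0, 0) ↔ (2 : L) = 0 ∧ β 0 * β 3 * β 6 * β 9 * β 12 = 1 ∧
      α 0 * α 1 * α 2 = β 0 * β 1 * β 2 * β 14 := by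
  obtain ⟨-, -, -, -, -, -, -, -, -, -, h15⟩ := auxV_list σ α β hα hβ
  rw [h15]
  simp only [Prod.mk.injEq]
  have B15 : β 15 = β 0 := hβp 0
  have B16 : β 16 = β 1 := hβp 1
  have B17 : β 17 = β 2 := hβp 2
  have B18 : β 18 = β 3 := hβp 3
  have B19 : β 19 = β 4 := hβp 4
  have B20 : β 20 = β 5 := hβp 5
  have B21 : β 21 = β 6 := hβp 6
  have B22 : β 22 = β 7 := hβp 7
  have B23 : β 23 = β 8 := hβp 8
  have B28 : β 28 = β 13 := hβp 13
  have A15 : α 15 = α 0 := hαp 0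
  have A16 : α 16 = α 1 := hαp 1
  have A19 : α 19 = α 4 := hαp 4
  have A23 : α 23 = α 8 := hαp 8
  -- facts derived from the `D` equation
  have hE : α 3 * α 7 * α 11 + β 2 * β 5 * β 8 * β 11 = 0 →
      ∀ k, α (k+3) * α (k+7) * α (k+11) + β (k+2) * β (k+5) * β (k+8) * β (k+11) = 0 := by
    intro h k
    induction k with
    | zero => simpa using h
    | succ k ih =>
      have := congrArg σ ih
      simp only [map_mul, map_add, map_zero, hα, hβ] at this
      exact this
  have hC' : α 3 * β 6 * β 9 * β 12 + β 2 * α 6 * β 9 * β 12 + β 2 * β 5 * α 9 * β 12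
        + β 2 * β 5 * β 8 * α 12 = 0 →
      ∀ k, α (k+3) * β (k+6) * β (k+9) * β (k+12) + β (k+2) * α (k+6) * β (k+9) * β (k+12)
        + β (k+2) * β (k+5) * α (k+9) * β (k+12) + β (k+2) * β (k+5) * β (k+8) * α (k+12) = 0 := by
    intro h k
    induction k with
    | zero => simpa using h
    | succ k ih =>
      have := congrArg σ ih
      simp only [map_mul, map_add, map_zero, hα, hβ] at this
      exact this
  have hR : α 3 * α 7 * α 11 + β 2 * β 5 * β 8 * β 11 = 0 →
      ∀ k, α (k+3) * β k * β (k+6) * β (k+9) * β (k+12)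
        = α k * β (k+2) * β (k+5) * β (k+8) * β (k+11) := by
    intro h k
    induction k with
    | zero =>
      have e0 := hE h 0
      have e4 := hE h 4
      simp only [Nat.reduceAdd, A15, B15] at e0 e4
      simp only [zero_add]
      linear_combination α 3 * e4 - α 0 * e0
    | succ k ih =>
      have := congrArg σ ih
      simp only [map_mul, hα, hβ] at this
      exact this
  have hRs : α 3 * α 7 * α 11 + β 2 * β 5 * β 8 * β 11 = 0 →
      (α 6 * β 3 * β 9 * β 12 * β 0 = α 3 * β 5 * β 8 * β 11 * β 14) ∧
      (α 9 * β 6 * β 12 * β 0 * β 3 = α 6 * β 8 * β 11 * β 14 * β 2) ∧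
      (α 12 * β 9 * β 0 * β 3 * β 6 = α 9 * β 11 * β 14 * β 2 * β 5) := by
    intro h
    have r3 := hR h 3
    have r6 := hR h 6
    have r9 := hR h 9
    simp only [Nat.reduceAdd, B15, B17, B18, B20, B21] at r3 r6 r9
    exact ⟨r3, r6, r9⟩
  have hEs : α 3 * α 7 * α 11 + β 2 * β 5 * β 8 * β 11 = 0 →
      (α 7 * α 11 * α 0 + β 6 * β 9 * β 12 * β 0 = 0) ∧
      (α 11 * α 0 * α 4 + β 10 * β 13 * β 1 * β 4 = 0) ∧
      (α 0 * α 4 * α 8 + β 14 * β 2 * β 5 * β 8 = 0) := by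
    intro h
    have e4 := hE h 4
    have e8 := hE h 8
    have e12 := hE h 12
    simp only [Nat.reduceAdd, A15, A19, A23, B15, B16, B17, B19, B20, B23] at e4 e8 e12
    exact ⟨e4, e8, e12⟩
  have su : σ (β 0 * β 3 * β 6 * β 9 * β 12) = β 1 * β 4 * β 7 * β 10 * β 13 := by
    simp only [map_mul, hβ]
  have sv : σ (β 1 * β 4 * β 7 * β 10 * β 13) = β 2 * β 5 * β 8 * β 11 * β 14 := by
    simp only [map_mul, hβ]
  have sw : σ (β 2 * β 5 * β 8 * β 11 * β 14) = β 0 * β 3 * β 6 * β 9 * β 12 := by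
    simp only [map_mul, hβ, Nat.reduceAdd, B15]; ring
  constructor
  · rintro ⟨h0, hB, hC, hD⟩
    have ha0 : α 0 ≠ 0 := by
      intro h; rw [h] at h0; simp at h0
    have na := aux_ne σ α hα ha0
    have hb0 : β 0 ≠ 0 := by
      intro h
      have h2 : β 2 = 0 := by rw [← hβ 1, ← hβ 0, h]; simp
      rw [h2] at hD
      simp [na] at hD
    have nb := aux_ne σ β hβ hb0
    obtain ⟨e4, e8, e12⟩ := hEs hD
    obtain ⟨r3, r6, r9⟩ := hRs hD
    have hc1 : α 3 * β 6 * β 9 * β 12 + β 2 * α 6 * β 9 * β 12 + β 2 * β 5 * α 9 * β 12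
        + β 2 * β 5 * β 8 * α 12 = 0 := by
      have := congrArg σ hC
      simp only [map_mul, map_add, map_zero, hα, hβ, Nat.reduceAdd] at this
      exact this
    have c3 := hC' hc1 2
    simp only [Nat.reduceAdd] at c3
    have p2 : α 14 * α 0 * α 1 * β 4 * β 7 * β 10 = β 14 * β 0 := by
      linear_combination α 0 * α 1 * c3 - β 14 * α 0 * hB + β 14 * β 0 * h0
    have p3 : α 0 * α 1 * α 2 * β 5 * β 8 * β 11 = β 0 * β 1 := by
      have := congrArg σ p2
      simp only [map_mul, hα, hβ, Nat.reduceAdd, A15, B15] at this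
      exact this
    have hsum : β 0 * β 3 * β 6 * β 9 * β 12 + β 1 * β 4 * β 7 * β 10 * β 13
        + β 2 * β 5 * β 8 * β 11 * β 14 = -1 := by
      linear_combination -h0 + β 11 * e12 + β 7 * e8 + β 3 * e4
    have t2 : (β 0 * β 3 * β 6 * β 9 * β 12) * (β 2 * α 6 * β 9 * β 12)
        = (β 2 * β 5 * β 8 * β 11 * β 14) * (α 3 * β 6 * β 9 * β 12) := by
      linear_combination (β 6 * β 9 * β 12 * β 2) * r3
    have t3 : (β 0 * β 3 * β 6 * β 9 * β 12) * (β 2 * β 5 * α 9 * β 12)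
        = (β 2 * β 5 * β 8 * β 11 * β 14) * (β 2 * α 6 * β 9 * β 12) := by
      linear_combination (β 9 * β 2 * β 5 * β 12) * r6
    have t4 : (β 0 * β 3 * β 6 * β 9 * β 12) * (β 2 * β 5 * β 8 * α 12)
        = (β 2 * β 5 * β 8 * β 11 * β 14) * (β 2 * β 5 * α 9 * β 12) := by
      linear_combination (β 12 * β 2 * β 5 * β 8) * r9
    have hT : α 3 * β 6 * β 9 * β 12 ≠ 0 := by simp [na, nb]
    have hu : β 0 * β 3 * β 6 * β 9 * β 12 ≠ 0 := by simp [nb]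
    have hw3 : β 2 * β 5 * β 8 * β 11 * β 14
      = β 2 * β 14 * (β 5 * β 8 * β 11) := by ring
    generalize hue : β 0 * β 3 * β 6 * β 9 * β 12 = u at *
    generalize hve : β 1 * β 4 * β 7 * β 10 * β 13 = v at *
    generalize hwe : β 2 * β 5 * β 8 * β 11 * β 14 = w at *
    generalize α 3 * β 6 * β 9 * β 12 = T1 at *
    generalize β 2 * α 6 * β 9 * β 12 = T2 at *
    generalize β 2 * β 5 * α 9 * β 12 = T3 at *
    generalize β 2 * β 5 * β 8 * α 12 = T4 at *
    have hpoly : T1 * ((u + w) * (u ^ 2 + w ^ 2)) = 0 := by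
      linear_combination u ^ 3 * hc1 - (u ^ 2 + u * w + w ^ 2) * t2 - (u ^ 2 + u * w) * t3 - u ^ 2 * t4
    have hpoly' := (mul_eq_zero.1 hpoly).resolve_left hT
    have two : (2 : L) = 0 := by
      rcases mul_eq_zero.1 hpoly' with h | h
      · have h1 := congrArg σ h
        simp only [map_add, map_zero, su, sw] at h1
        have h2 := congrArg σ h1
        simp only [map_add, map_zero, su, sv] at h2
        have : u * 2 = 0 := by linear_combination h + h1 - h2
        exact (mul_eq_zero.1 this).resolve_left hu
      · have h1 := congrArg σ h
        simp only [map_add, map_pow, map_zero, su, sw] at h1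
        have h2 := congrArg σ h1
        simp only [map_add, map_pow, map_zero, su, sv] at h2
        have : u ^ 2 * 2 = 0 := by linear_combination h + h1 - h2
        exact (mul_eq_zero.1 this).resolve_left (pow_ne_zero _ hu)
    have huw : u + w = 0 := by
      have : (u + w) ^ 3 = 0 := by linear_combination hpoly' + (u ^ 2 * w + u * w ^ 2) * two
      exact pow_eq_zero_iff (by norm_num) |>.1 this
    have hvu := congrArg σ huw
    simp only [map_add, map_zero, su, sw] at hvu
    have hu1 : u = 1 := by linear_combination -huw - hvu + hsum + (u - 1) * two
    refine ⟨two, hu1, ?_⟩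
    have hw1 : w = 1 := by linear_combination huw - hu1 - two
    linear_combination β 2 * β 14 * p3 - (α 0 * α 1 * α 2) * (hw1) + (α 0 * α 1 * α 2) * hw3
  · rintro ⟨two, hu, hQ0⟩
    have hv : β 1 * β 4 * β 7 * β 10 * β 13 = 1 := by rw [← su, hu, map_one]
    have hw : β 2 * β 5 * β 8 * β 11 * β 14 = 1 := by rw [← sv, hv, map_one]
    have hb0 : β 0 ≠ 0 := by
      intro h; rw [h] at hu; simp at hu
    have nb := aux_ne σ β hβ hb0
    have ha0 : α 0 ≠ 0 := by
      intro h; rw [h] at hQ0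
      simp [nb] at hQ0
    have hQ : ∀ k, α k * α (k+1) * α (k+2) = β k * β (k+1) * β (k+2) * β (k+14) := by
      intro k
      induction k with
      | zero => exact hQ0
      | succ k ih =>
        have := congrArg σ ih
        simp only [map_mul, hα, hβ] at this
        exact this
    have hS : ∀ k, α (k+3) * β (k+14) = α k * β (k+3) := by
      intro k
      have q0 := hQ k
      have q1 : α (k+1) * α (k+2) * α (k+3) = β (k+1) * β (k+2) * β (k+3) * β (k+15) := hQ (k+1)
      rw [hβp] at q1
      have hM : β k * β (k+1) * β (k+2) ≠ 0 := by simp [nb]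
      apply mul_left_cancel₀ hM
      linear_combination α k * q1 - α (k+3) * q0
    have s0 : α 3 * β 14 = α 0 * β 3 := hS 0
    have s1 := hS 1
    have s4 := hS 4
    have s2 := hS 2
    have s5 := hS 5
    have s8 := hS 8
    simp only [Nat.reduceAdd, B15, B16, B18, B19, B22] at s1 s2 s4 s5 s8
    have m7 : α 7 * β 3 * β 0 = α 1 * β 4 * β 7 := by
      linear_combination β 0 * s4 + β 7 * s1
    have m11 : α 11 * β 7 * β 4 * β 1 = α 2 * β 5 * β 8 * β 11 := by
      linear_combination β 4 * β 1 * s8 + β 11 * β 1 * s5 + β 11 * β 8 * s2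
    have hD' : α 3 * α 7 * α 11 = β 2 * β 5 * β 8 * β 11 := by
      have hM : β 14 * β 3 * β 0 * β 7 * β 4 * β 1 ≠ 0 := by simp [nb]
      apply mul_left_cancel₀ hM
      have : (α 3 * β 14) * (α 7 * β 3 * β 0) * (α 11 * β 7 * β 4 * β 1)
        = (α 0 * β 3) * (α 1 * β 4 * β 7) * (α 2 * β 5 * β 8 * β 11) := by rw [s0, m7, m11]
      linear_combination this + β 3 * β 4 * β 7 * β 5 * β 8 * β 11 * hQ0
    have hD : α 3 * α 7 * α 11 + β 2 * β 5 * β 8 * β 11 = 0 := by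
      linear_combination hD' + β 2 * β 5 * β 8 * β 11 * two
    obtain ⟨e4, e8, e12⟩ := hEs hD
    obtain ⟨r3, r6, r9⟩ := hRs hD
    have t2 : (β 2 * α 6 * β 9 * β 12) = (α 3 * β 6 * β 9 * β 12) := by
      linear_combination (β 6 * β 9 * β 12 * β 2) * r3 - (β 2 * α 6 * β 9 * β 12) * hu
        + (α 3 * β 6 * β 9 * β 12) * hw
    have t3 : (β 2 * β 5 * α 9 * β 12) = (β 2 * α 6 * β 9 * β 12) := by
      linear_combination (β 9 * β 2 * β 5 * β 12) * r6 - (β 2 * β 5 * α 9 * β 12) * hu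
        + (β 2 * α 6 * β 9 * β 12) * hw
    have t4 : (β 2 * β 5 * β 8 * α 12) = (β 2 * β 5 * α 9 * β 12) := by
      linear_combination (β 12 * β 2 * β 5 * β 8) * r9 - (β 2 * β 5 * β 8 * α 12) * hu
        + (β 2 * β 5 * α 9 * β 12) * hw
    have hc1 : α 3 * β 6 * β 9 * β 12 + β 2 * α 6 * β 9 * β 12 + β 2 * β 5 * α 9 * β 12
        + β 2 * β 5 * β 8 * α 12 = 0 := by
      rw [t4, t3, t2]
      linear_combination 2 * α 3 * β 6 * β 9 * β 12 * two
    have c3 := hC' hc1 2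
    simp only [Nat.reduceAdd] at c3
    have h0 : α 0 * α 4 * α 8 * β 11 + α 0 * α 4 * β 7 * α 11 + α 0 * β 3 * α 7 * α 11 = 1 := by
      linear_combination β 11 * e12 + β 7 * e8 + β 3 * e4 - hu - hv - hw - 2 * two
    refine ⟨h0, ?_, ?_, hD⟩
    · have q14 := hQ 14
      simp only [Nat.reduceAdd, A15, A16, B15, B16, B28] at q14
      have p2 : α 14 * α 0 * α 1 * β 4 * β 7 * β 10 = β 14 * β 0 := by
        linear_combination β 4 * β 7 * β 10 * q14 + β 14 * β 0 * hv
      have hM : β 14 * α 0 ≠ 0 := mul_ne_zero (nb 14) ha0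
      apply mul_left_cancel₀ hM
      linear_combination α 0 * α 1 * c3 + β 14 * β 0 * h0 - p2
    · apply (map_eq_zero σ).1
      simp only [map_mul, map_add, hα, hβ, Nat.reduceAdd]
      exact hc1

theorem aux_count13 (σ : L ≃ₐ[K] L) (hσn : ∀ x, (σ ^ 13) x = x) (three : (3 : L) = 0) :
    Nat.card {ab : L × L // auxV σ ab.1 ab.2 13 = (1, 0, 0, 0)}
      = Nat.card {b : L // auxN σ 13 b = 1} := by
  have hstep : ∀ (x : L) (i : ℕ), σ ((σ ^ i) x) = (σ ^ (i+1)) x := by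
    intro x i; rw [pow_succ', AlgEquiv.mul_apply]
  have hper : ∀ (x : L) (i : ℕ), (σ ^ (i+13)) x = (σ ^ i) x := by
    intro x i; rw [pow_add, AlgEquiv.mul_apply, hσn]
  have hiff : ∀ ab : L × L, auxV σ ab.1 ab.2 13 = (1, 0, 0, 0) ↔
      ab.1 * (σ ^ 3) ab.2 * (σ ^ 6) ab.2 * (σ ^ 9) ab.2 = 1 ∧ auxN σ 13 ab.2 = -1 := by
    rintro ⟨a, b⟩
    have := aux_alg13 σ (fun i => (σ ^ i) a) (fun i => (σ ^ i) b) (hstep a) (hstep b) (hper b)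
    simp only [pow_zero, AlgEquiv.one_apply] at this
    rw [this]
    simp only [three, true_and, auxN, Finset.prod_range_succ, Finset.prod_range_zero, one_mul,
      pow_zero, AlgEquiv.one_apply]
  have hneg : ∀ b : L, auxN σ 13 (-b) = - auxN σ 13 b := by
    intro b
    simp only [auxN, Finset.prod_range_succ, Finset.prod_range_zero, map_neg]
    ring
  have hne : ∀ b : L, auxN σ 13 b = -1 → b ≠ 0 := by
    rintro b hb rfl
    simp [auxN, Finset.prod_range_succ] at hb
  rw [Nat.card_congr (Equiv.subtypeEquivRight hiff)]
  refine Nat.card_congr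
    { toFun := fun x => ⟨-x.1.2, by rw [hneg, x.2.2, neg_neg]⟩
      invFun := fun b => ⟨(((σ ^ 3) (-b.1) * (σ ^ 6) (-b.1) * (σ ^ 9) (-b.1))⁻¹, -b.1), ?_, ?_⟩
      left_inv := ?_
      right_inv := ?_ }
  · have hb : auxN σ 13 (-b.1) = -1 := by rw [hneg, b.2]
    have h0 := hne _ hb
    have h : ∀ i, (σ ^ i) (-b.1) ≠ 0 := fun i => (map_ne_zero_iff _ (σ ^ i).injective).2 h0
    have h3 := h 3
    have h6 := h 6
    have h9 := h 9
    dsimp only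
    generalize (σ ^ 3) (-b.1) = x at *
    generalize (σ ^ 6) (-b.1) = y at *
    generalize (σ ^ 9) (-b.1) = z at *
    field_simp
  · dsimp only
    rw [hneg, b.2]
  · rintro ⟨⟨a, b⟩, h1, h2⟩
    simp only [neg_neg, Subtype.mk.injEq, Prod.mk.injEq, and_true]
    dsimp only at h1
    rw [mul_assoc, mul_assoc, ← mul_assoc ((σ ^ 3) b)] at h1
    exact (eq_inv_of_mul_eq_one_left h1).symm
  · rintro ⟨b, h⟩
    simp

theorem aux_count15 (σ : L ≃ₐ[K] L) (hσn : ∀ x, (σ ^ 15) x = x) (two : (2 : L) = 0)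
    (h90 : ∀ b : L, auxN (σ ^ 3) 5 b = 1 → ∃ l : L, l ≠ 0 ∧ b * (σ ^ 3) l = l) :
    Nat.card {ab : L × L // auxV σ ab.1 ab.2 15 = (1, 0, 0, 0)}
      = Nat.card {b : L // auxN (σ ^ 3) 5 b = 1} * Nat.card {a : L // auxN σ 3 a = 1} := by
  have hstep : ∀ (x : L) (i : ℕ), σ ((σ ^ i) x) = (σ ^ (i+1)) x := by
    intro x i; rw [pow_succ', AlgEquiv.mul_apply]
  have hper : ∀ (x : L) (i : ℕ), (σ ^ (i+15)) x = (σ ^ i) x := by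
    intro x i; rw [pow_add, AlgEquiv.mul_apply, hσn]
  have hadd : ∀ (x : L) (i j : ℕ), (σ ^ i) ((σ ^ j) x) = (σ ^ (i+j)) x := by
    intro x i j; rw [pow_add, AlgEquiv.mul_apply]
  have hiff : ∀ ab : L × L, auxV σ ab.1 ab.2 15 = (1, 0, 0, 0) ↔
      auxN (σ ^ 3) 5 ab.2 = 1 ∧
      auxN σ 3 ab.1 = ab.2 * (σ ^ 1) ab.2 * (σ ^ 2) ab.2 * (σ ^ 14) ab.2 := by
    rintro ⟨a, b⟩
    have := aux_alg15 σ (fun i => (σ ^ i) a) (fun i => (σ ^ i) b) (hstep a) (hstep b)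
      (hper a) (hper b)
    simp only [pow_zero, AlgEquiv.one_apply] at this
    rw [this]
    simp only [two, true_and, auxN, Finset.prod_range_succ, Finset.prod_range_zero, one_mul,
      pow_zero, AlgEquiv.one_apply, ← pow_mul, Nat.reduceMul]
  have hr : ∀ b : L, ∃ r : L, auxN (σ ^ 3) 5 b = 1 → r ≠ 0 ∧
      auxN σ 3 r = b * (σ ^ 1) b * (σ ^ 2) b * (σ ^ 14) b := by
    intro b
    by_cases hb : auxN (σ ^ 3) 5 b = 1
    · obtain ⟨l, hl, h⟩ := h90 b hb
      have n : ∀ i, (σ ^ i) l ≠ 0 := fun i => (map_ne_zero_iff _ (σ ^ i).injective).2 hl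
      have hbl : b = l / (σ ^ 3) l := by
        have := n 3
        rw [eq_div_iff this, h]
      refine ⟨(σ ^ 14) l / (σ ^ 3) l, fun _ => ⟨div_ne_zero (n _) (n _), ?_⟩⟩
      simp only [hbl, auxN, Finset.prod_range_succ, Finset.prod_range_zero, one_mul,
        pow_zero, AlgEquiv.one_apply, map_div₀, hadd, Nat.reduceAdd]
      have e15 : (σ ^ 15) l = l := hσn l
      have e16 : (σ ^ 16) l = (σ ^ 1) l := hper l 1
      have e17 : (σ ^ 17) l = (σ ^ 2) l := hper l 2
      rw [e15, e16, e17]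
      have n1 := n 1
      have n2 := n 2
      have n3 := n 3
      have n4 := n 4
      have n5 := n 5
      have n14 := n 14
      generalize (σ ^ 1) l = x1 at *
      generalize (σ ^ 2) l = x2 at *
      generalize (σ ^ 3) l = x3 at *
      generalize (σ ^ 4) l = x4 at *
      generalize (σ ^ 5) l = x5 at *
      generalize (σ ^ 14) l = x14 at *
      field_simp
    · exact ⟨0, fun h => absurd h hb⟩
  choose r hr using hr
  have hmul : ∀ x y : L, auxN σ 3 (x * y) = auxN σ 3 x * auxN σ 3 y := by
    intro x y
    simp only [auxN, map_mul, Finset.prod_mul_distrib]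
  have hdiv : ∀ x y : L, auxN σ 3 (x / y) = auxN σ 3 x / auxN σ 3 y := by
    intro x y
    simp only [auxN, map_div₀, Finset.prod_div_distrib]
  have hne : ∀ x : L, x ≠ 0 → auxN σ 3 x ≠ 0 := by
    intro x hx
    exact Finset.prod_ne_zero_iff.2 fun i _ => (map_ne_zero_iff _ (σ ^ i).injective).2 hx
  rw [Nat.card_congr (Equiv.subtypeEquivRight hiff), ← Nat.card_prod]
  refine Nat.card_congr
    { toFun := fun x => (⟨x.1.2, x.2.1⟩, ⟨x.1.1 / r x.1.2, ?_⟩)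
      invFun := fun y => ⟨(y.2.1 * r y.1.1, y.1.1), y.1.2, ?_⟩
      left_inv := ?_
      right_inv := ?_ }
  · obtain ⟨h0, h1⟩ := hr _ x.2.1
    rw [hdiv, h1, x.2.2]
    rw [h1.symm]
    exact div_self (hne _ h0)
  · obtain ⟨h0, h1⟩ := hr _ y.1.2
    dsimp only
    rw [hmul, h1, y.2.2, one_mul]
  · rintro ⟨⟨a, b⟩, h1, h2⟩
    obtain ⟨h0, -⟩ := hr _ h1
    simp only [Subtype.mk.injEq, Prod.mk.injEq, and_true]
    dsimp only at h0
    field_simp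
  · rintro ⟨⟨b, hb⟩, ⟨a, ha⟩⟩
    obtain ⟨h0, -⟩ := hr _ hb
    simp only [Prod.mk.injEq, Subtype.mk.injEq, true_and]
    field_simp

theorem aux_count4 (σ : L ≃ₐ[K] L) (m n : ℕ)
    (hiff : ∀ a b : L, auxV σ a b n = (1, 0, 0, 0) ↔ b = 0 ∧ auxN (σ ^ 4) m a = 1) :
    Nat.card {ab : L × L // auxV σ ab.1 ab.2 n = (1, 0, 0, 0)}
      = Nat.card {a : L // auxN (σ ^ 4) m a = 1} := by
  rw [Nat.card_congr (Equiv.subtypeEquivRight fun ab : L × L => hiff ab.1 ab.2)]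
  refine Nat.card_congr
    { toFun := fun x => ⟨x.1.1, x.2.2⟩
      invFun := fun a => ⟨(a.1, 0), rfl, a.2⟩
      left_inv := ?_
      right_inv := ?_ }
  · rintro ⟨⟨a, b⟩, h, h'⟩
    dsimp only at h
    subst h
    rfl
  · rintro ⟨a, h⟩
    rfl

theorem aux_iff8 (σ : L ≃ₐ[K] L) (a b : L) :
    auxV σ a b 8 = (1, 0, 0, 0) ↔ b = 0 ∧ auxN (σ ^ 4) 2 a = 1 := by
  have hstep : ∀ (x : L) (i : ℕ), σ ((σ ^ i) x) = (σ ^ (i+1)) x := by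
    intro x i; rw [pow_succ', AlgEquiv.mul_apply]
  obtain ⟨-, -, -, h, -⟩ := auxV_list σ (fun i => (σ ^ i) a) (fun i => (σ ^ i) b)
    (hstep a) (hstep b)
  have n : ∀ i, (σ ^ i) b = 0 ↔ b = 0 := fun i => map_eq_zero_iff _ (σ ^ i).injective
  simp only [pow_zero, AlgEquiv.one_apply] at h
  rw [h]
  simp only [Prod.mk.injEq, auxN, Finset.prod_range_succ, Finset.prod_range_zero, one_mul,
      pow_zero, AlgEquiv.one_apply, pow_one (σ ^ 4), and_true]
  constructor
  · rintro ⟨h1, h2, h3⟩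
    refine ⟨?_, h1⟩
    rcases mul_eq_zero.1 h3 with h | h
    · exact (n 1).1 h
    · exact (n 4).1 h
  · rintro ⟨rfl, h1⟩
    simp only [map_zero, mul_zero, zero_mul, add_zero, and_true]
    exact h1

theorem aux_iff12 (σ : L ≃ₐ[K] L) (a b : L) :
    auxV σ a b 12 = (1, 0, 0, 0) ↔ b = 0 ∧ auxN (σ ^ 4) 3 a = 1 := by
  have hstep : ∀ (x : L) (i : ℕ), σ ((σ ^ i) x) = (σ ^ (i+1)) x := by
    intro x i; rw [pow_succ', AlgEquiv.mul_apply]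
  obtain ⟨-, -, -, -, -, -, -, h, -⟩ := auxV_list σ (fun i => (σ ^ i) a) (fun i => (σ ^ i) b)
    (hstep a) (hstep b)
  have n : ∀ i, (σ ^ i) b = 0 ↔ b = 0 := fun i => map_eq_zero_iff _ (σ ^ i).injective
  simp only [pow_zero, AlgEquiv.one_apply] at h
  rw [h]
  simp only [Prod.mk.injEq, auxN, Finset.prod_range_succ, Finset.prod_range_zero, one_mul,
      pow_zero, AlgEquiv.one_apply, ← pow_mul, Nat.reduceMul]
  constructor
  · rintro ⟨h1, h2, h3, h4⟩
    refine ⟨?_, h1⟩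
    rcases mul_eq_zero.1 h4 with h | h
    · rcases mul_eq_zero.1 h with h | h
      · exact (n 2).1 h
      · exact (n 5).1 h
    · exact (n 8).1 h
  · rintro ⟨rfl, h1⟩
    simp only [map_zero, mul_zero, zero_mul, add_zero, and_true]
    exact h1

theorem aux_small (σ : L ≃ₐ[K] L) (a b : L) (n : ℕ) (h5 : 5 ≤ n) (h11 : n ≤ 11) (h8 : n ≠ 8) :
    auxV σ a b n ≠ (1, 0, 0, 0) := by
  have hstep : ∀ (x : L) (i : ℕ), σ ((σ ^ i) x) = (σ ^ (i+1)) x := by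
    intro x i; rw [pow_succ', AlgEquiv.mul_apply]
  obtain ⟨e5, e6, e7, -, e9, e10, e11, -⟩ := auxV_list σ (fun i => (σ ^ i) a) (fun i => (σ ^ i) b)
    (hstep a) (hstep b)
  have na : ∀ i, (σ ^ i) a = 0 ↔ a = 0 := fun i => map_eq_zero_iff _ (σ ^ i).injective
  simp only [pow_zero, AlgEquiv.one_apply] at e5 e6 e7 e9 e10 e11
  intro h
  interval_cases n
  · rw [e5] at h; simp only [Prod.mk.injEq] at h; exact zero_ne_one h.1
  · rw [e6] at h; simp only [Prod.mk.injEq] at h; exact zero_ne_one h.1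
  · rw [e7] at h; simp only [Prod.mk.injEq, na] at h
    obtain ⟨h1, -, -, h2⟩ := h
    rw [h2, zero_mul] at h1; exact zero_ne_one h1
  · exact h8 rfl
  · rw [e9] at h; simp only [Prod.mk.injEq] at h; exact zero_ne_one h.1
  · rw [e10] at h; simp only [Prod.mk.injEq, mul_eq_zero (a := (σ ^ 2) a), na, or_self] at h
    obtain ⟨h1, -, h2, -⟩ := h
    rw [h2, zero_mul, zero_mul] at h1; exact zero_ne_one h1
  · rw [e11] at h; simp only [Prod.mk.injEq, mul_eq_zero (a := (σ ^ 3) a), na, or_self] at h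
    obtain ⟨h1, -, -, h2⟩ := h
    rw [h2] at h1
    simp at h1

theorem aux_natdiv (N X Y c : ℕ) (hc : 0 < c) (h : X * c = N) (hY : Y = X) : N * Y = N ^ 2 / c := by
  subst hY
  rw [← h]
  symm
  apply Nat.div_eq_of_eq_mul_left hc
  ring
end aux

/-- With `σ : x ↦ x^{q^s}`, `gcd(s,n) = 1`, a generator of
`Gal(F_{q^n}/F_q)`, and `D` the number of triples `(c₀,c₁,c₄)` whose associated map
`x ↦ c₀x + c₁σ(x) + c₄σ⁴(x)` has kernel dimension exactly `4`: `D = 0` for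
`5 ≤ n ≤ 11`, `n ≠ 8`; `D = (qⁿ-1)²/(q⁴-1)` for `n ∈ {8,12}`; for `n = 13`, `D = 0` if
`q` is not a power of `3` and `D = (q¹³-1)²/(q-1)` otherwise; for `n = 15`, `D = 0` if
`q` is odd and `D = (q¹⁵-1)²/(q-1)` if `q` is even. -/
theorem stmt_16 (p q : ℕ) (hp : p.Prime) (hq : ∃ m : ℕ, 0 < m ∧ q = p ^ m)
    (K L : Type*) [Field K] [Field L] [Fintype K] [Fintype L] [Algebra K L]
    (hcardK : Fintype.card K = q)
    (n : ℕ) (hn : 0 < n) (hcardL : Fintype.card L = q ^ n)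
    (s : ℕ) (hs : 0 < s) (hsn : Nat.gcd s n = 1)
    (σ : L ≃ₐ[K] L) (hσ : ∀ x : L, σ x = x ^ q ^ s) :
    (5 ≤ n → n ≤ 11 → n ≠ 8 → weightCount4 K L σ = 0)
      ∧ (n = 8 ∨ n = 12 → weightCount4 K L σ = (q ^ n - 1) ^ 2 / (q ^ 4 - 1))
      ∧ (n = 13 →
          ((¬ ∃ m : ℕ, q = 3 ^ m) → weightCount4 K L σ = 0)
            ∧ ((∃ m : ℕ, q = 3 ^ m) → weightCount4 K L σ = (q ^ 13 - 1) ^ 2 / (q - 1)))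
      ∧ (n = 15 →
          (Odd q → weightCount4 K L σ = 0)
            ∧ (Even q → weightCount4 K L σ = (q ^ 15 - 1) ^ 2 / (q - 1))) := by
  have hq1 : 1 < q := by rw [← hcardK]; exact Fintype.one_lt_card
  obtain ⟨m, hm, hqm⟩ := hq
  have hf : Nat.card {x : L // σ x = x} = q := by
    have := aux_fix_card q n s 1 n hq1 (by simp) hn hcardL hsn σ hσ
    simpa using this
  have hfd : ∀ d k, n = d * k → Nat.card {x : L // (σ ^ d) x = x} = q ^ d := fun d k h =>
    aux_fix_card q n s d k hq1 h hn hcardL hsn σ hσ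
  have hσn : ∀ x, (σ ^ n) x = x := by
    have h := hfd n 1 (by simp)
    rw [← hcardL, ← Nat.card_eq_fintype_card] at h
    intro x
    by_contra hx
    have hlt : Nat.card {x : L // (σ ^ n) x = x} < Nat.card L := by
      classical
      rw [Nat.card_eq_fintype_card, Nat.card_eq_fintype_card]
      exact Fintype.card_subtype_lt hx
    omega
  have hcount := fun h5 : 5 ≤ n => aux_count q n hq1 h5 hcardK hcardL σ hf hσn
  have hq0 : (q : L) = 0 := by
    have h1 : (Fintype.card L : L) = 0 := by simp
    rw [hcardL, Nat.cast_pow] at h1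
    exact pow_eq_zero_iff (by omega) |>.1 h1
  have hp0 : (p : L) = 0 := by
    rw [hqm, Nat.cast_pow] at hq0
    exact pow_eq_zero_iff (by omega) |>.1 hq0
  have hchar : ∀ r : ℕ, r.Prime → (r : L) = 0 → p = r := by
    intro r hr h
    by_contra hne
    have hco : Nat.Coprime p r := (Nat.coprime_primes hp hr).2 hne
    haveI : CharP L (ringChar L) := ringChar.charP L
    have h1 := (ringChar.spec L p).1 hp0
    have h2 := (ringChar.spec L r).1 h
    have h3 := Nat.dvd_gcd h1 h2
    rw [hco] at h3
    have : ((1 : ℕ) : L) = 0 := (ringChar.spec L 1).2 h3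
    simp at this
  have hq4 : 1 < q ^ 4 := Nat.one_lt_pow (by norm_num) hq1
  refine ⟨?_, ?_, ?_, ?_⟩
  · intro h5 h11 h8
    rw [hcount h5]
    have : IsEmpty {ab : L × L // auxV σ ab.1 ab.2 n = (1, 0, 0, 0)} :=
      ⟨fun x => aux_small σ _ _ n h5 h11 h8 x.2⟩
    simp
  · rintro (rfl | rfl)
    · rw [hcount (by omega), aux_count4 σ 2 8 (aux_iff8 σ)]
      have := aux_h90_card (σ ^ 4) (q ^ 4) (hfd 4 2 rfl) hq4 1
        (by rw [← pow_mul, ← pow_mul]; exact hfd 8 1 rfl)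
      rw [← pow_mul] at this
      exact aux_natdiv _ _ _ _ (by omega) this rfl
    · rw [hcount (by omega), aux_count4 σ 3 12 (aux_iff12 σ)]
      have := aux_h90_card (σ ^ 4) (q ^ 4) (hfd 4 3 rfl) hq4 2
        (by rw [← pow_mul, ← pow_mul]; exact hfd 12 1 rfl)
      rw [← pow_mul] at this
      exact aux_natdiv _ _ _ _ (by omega) this rfl
  · rintro rfl
    refine ⟨?_, ?_⟩
    · intro h3
      rw [hcount (by omega)]
      have : IsEmpty {ab : L × L // auxV σ ab.1 ab.2 13 = (1, 0, 0, 0)} := by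
        refine ⟨fun x => h3 ⟨m, ?_⟩⟩
        have hh := (aux_alg13 σ (fun i => (σ ^ i) x.1.1) (fun i => (σ ^ i) x.1.2)
          (fun i => by rw [pow_succ', AlgEquiv.mul_apply])
          (fun i => by rw [pow_succ', AlgEquiv.mul_apply])
          (fun i => by rw [pow_add, AlgEquiv.mul_apply, hσn])).1
            (by simpa only [pow_zero, AlgEquiv.one_apply] using x.2)
        rw [hqm, hchar 3 Nat.prime_three (by exact_mod_cast hh.1)]
      simp
    · rintro ⟨k, hk⟩
      have three : (3 : L) = 0 := by
        rw [hk, Nat.cast_pow] at hq0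
        have := eq_zero_of_pow_eq_zero hq0
        exact_mod_cast this
      rw [hcount (by omega), aux_count13 σ hσn three]
      have := aux_h90_card σ q hf hq1 12 (hfd 13 1 rfl)
      exact aux_natdiv _ _ _ _ (by omega) this rfl
  · rintro rfl
    refine ⟨?_, ?_⟩
    · intro hodd
      rw [hcount (by omega)]
      have : IsEmpty {ab : L × L // auxV σ ab.1 ab.2 15 = (1, 0, 0, 0)} := by
        refine ⟨fun x => ?_⟩
        have hh := (aux_alg15 σ (fun i => (σ ^ i) x.1.1) (fun i => (σ ^ i) x.1.2)
          (fun i => by rw [pow_succ', AlgEquiv.mul_apply])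
          (fun i => by rw [pow_succ', AlgEquiv.mul_apply])
          (fun i => by rw [pow_add, AlgEquiv.mul_apply, hσn])
          (fun i => by rw [pow_add, AlgEquiv.mul_apply, hσn])).1
            (by simpa only [pow_zero, AlgEquiv.one_apply] using x.2)
        have hp2 := hchar 2 Nat.prime_two (by exact_mod_cast hh.1)
        rw [hqm, hp2] at hodd
        exact (Nat.not_odd_iff_even.2 ((Nat.even_pow' (by omega)).2 even_two)) hodd
      simp
    · intro heven
      have two : (2 : L) = 0 := by
        have hp2 : p = 2 := by
          rw [hqm] at heven
          exact (Nat.Prime.even_iff hp).1 ((Nat.even_pow' (by omega)).1 heven)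
        rw [hp2] at hp0
        exact_mod_cast hp0
      have hq3 : 1 < q ^ 3 := Nat.one_lt_pow (by norm_num) hq1
      have h15 : Nat.card {x : L // ((σ ^ 3) ^ (4+1)) x = x} = (q ^ 3) ^ (4+1) := by
        rw [← pow_mul, ← pow_mul]; exact hfd 15 1 rfl
      rw [hcount (by omega), aux_count15 σ hσn two (by
        intro b hb
        obtain ⟨l, h1, -, h2⟩ := aux_h90 (σ ^ 3) (q ^ 3) (hfd 3 5 rfl) 4
          (by rw [h15]; exact Nat.pow_lt_pow_right hq3 (by omega)) b hb
        exact ⟨l, h1, h2⟩)]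
      have e1 := aux_h90_card (σ ^ 3) (q ^ 3) (hfd 3 5 rfl) hq3 4 h15
      have e2 := aux_h90_card σ q hf hq1 2 (hfd 3 5 rfl)
      rw [← pow_mul] at e1
      refine aux_natdiv _ _ _ _ (by omega) ?_ rfl
      rw [mul_assoc]
      exact (congrArg _ e2).trans e1
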